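/- For all i, j ∈ {1,…,n}, all integers m, l, and both choices of sign ±, the matrices of the vector representation satisfy X^±_i(m+d_{ij})·X^±_j(l) − q_i^{±A_{ij}}·X^±_j(l)·X^±_i(m+d_{ij}) = q_i^{±A_{ij}}·X^±_i(m)·X^±_j(l+d_{ij}) − X^±_j(l+d_{ij})·X^±_i(m), where d_{ij} = max(d_i, d_j). -/

import Mathlib

/-!
Every generator is a combination of at most two matrix units, so a product `X_i X_j` vanishes
unless `i` and `j` are adjacent nodes (`XP_mul_eq_zero`), and the relation is trivial for the
remaining pairs. For adjacent nodes `j = i + 1`, each of `X_i X_j` and `X_j X_i` is a multiple of a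
single matrix unit, and the relation becomes two identities between powers of `q` and `ξ`:
`quadRel_XP_short` (both nodes before the last one) and `quadRel_XP_long` (`j` the last node, where
`ξ² = q^{-4n}` enters).

Two symmetries give the rest. The relation is invariant under exchanging `(i, m)` with `(j, l)`,
because `q_i^{A_{ij}} = q_j^{A_{ji}}` (`QuadRel.symm`, `qC_zpow_AC_comm`). Since `X^-_i(k)` is the
transpose of `X^+_i(k)`, transposing the relation for `X^+` gives that for `X^-`
(`QuadRel.transpose`).
-/

set_option maxHeartbeats 1000000
set_option synthInstance.maxHeartbeats 1000000

noncomputable section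

open Matrix

/-- The base field `ℚ(q)`. -/
abbrev FF : Type := RatFunc ℚ

/-- The indeterminate `q` of `ℚ(q)`. -/
def qF : FF := RatFunc.X

/-- `ξ = −q^{−2n}`. -/
def xiF (n : ℕ) : FF := -qF ^ (-(2 * (n : ℤ)))

/-- The matrix unit `e_{ab}` with 1-based labels `a, b ∈ {1,…,2n}`. -/
def eMat (n : ℕ) (a b : ℕ) : Matrix (Fin (2*n)) (Fin (2*n)) FF :=
  fun r c => if r.val + 1 = a ∧ c.val + 1 = b then 1 else 0

/-- `d_i = 1` for `i < n` and `d_n = 2` (1-based). -/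
def dC (n : ℕ) (i : Fin n) : ℕ := if i.val + 1 = n then 2 else 1

/-- `q_i = q^{d_i}`. -/
def qC (n : ℕ) (i : Fin n) : FF := qF ^ (dC n i : ℤ)

/-- The Cartan matrix of type `C_n` (0-based indexing). -/
def AC (n : ℕ) (i j : Fin n) : ℤ :=
  if i = j then 2
  else if i.val + 1 = j.val ∨ j.val + 1 = i.val then
    (if i.val + 2 = n ∧ j.val + 1 = n then -2 else -1)
  else 0

/-- The `q`-number `[k]_x = (x^k − x^{−k})/(x − x^{−1})`. -/
def qNum (x : FF) (k : ℤ) : FF := (x ^ k - x ^ (-k)) / (x - x⁻¹)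

/-- The image of the Drinfeld generator `x^+_{i,k}` in the vector representation
(`0` for odd `k` when `i = n`). -/
def XP (n : ℕ) (i : Fin n) (k : ℤ) : Matrix (Fin (2*n)) (Fin (2*n)) FF :=
  if i.val + 1 = n then
    (if 2 ∣ k then (-(qF ^ (-(n : ℤ) * k))) • eMat n (n+1) n else 0)
  else
    (-(qF ^ (-((i.val : ℤ) + 1) * k))) • eMat n (i.val + 2) (i.val + 1)
      + (xiF n ^ k * qF ^ (((i.val : ℤ) + 1) * k)) • eMat n (2*n - i.val) (2*n - i.val - 1)

/-- The image of the Drinfeld generator `x^-_{i,k}` in the vector representation. -/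
def XM (n : ℕ) (i : Fin n) (k : ℤ) : Matrix (Fin (2*n)) (Fin (2*n)) FF :=
  if i.val + 1 = n then
    (if 2 ∣ k then (-(qF ^ (-(n : ℤ) * k))) • eMat n n (n+1) else 0)
  else
    (-(qF ^ (-((i.val : ℤ) + 1) * k))) • eMat n (i.val + 1) (i.val + 2)
      + (xiF n ^ k * qF ^ (((i.val : ℤ) + 1) * k)) • eMat n (2*n - i.val - 1) (2*n - i.val)

/-- The image of the Drinfeld generator `a_{i,k}` in the vector representation. -/
def AOp (n : ℕ) (i : Fin n) (k : ℤ) : Matrix (Fin (2*n)) (Fin (2*n)) FF :=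
  if i.val + 1 = n then
    (if 2 ∣ k then
      (qNum (qF ^ (2:ℤ)) (k/2) / ((k/2 : ℤ) : FF)) •
        ((qF ^ (2:ℤ)) ^ (-(n : ℤ) * (k/2)) •
          ((qF ^ (2:ℤ)) ^ (-(k/2)) • eMat n (n+1) (n+1) - (qF ^ (2:ℤ)) ^ (k/2) • eMat n n n))
    else 0)
  else
    (qNum qF k / (k : FF)) •
      (qF ^ (-((i.val : ℤ) + 1) * k) •
          (qF ^ (-k) • eMat n (i.val + 2) (i.val + 2) - qF ^ k • eMat n (i.val + 1) (i.val + 1))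
        + (xiF n ^ k * qF ^ (((i.val : ℤ) + 1) * k)) •
          (qF ^ (-k) • eMat n (2*n - i.val) (2*n - i.val)
            - qF ^ k • eMat n (2*n - i.val - 1) (2*n - i.val - 1)))

/-- The image of `k_i` in the vector representation. -/
def KOp (n : ℕ) (i : Fin n) : Matrix (Fin (2*n)) (Fin (2*n)) FF :=
  fun r c =>
    if r ≠ c then 0
    else if i.val + 1 = n then
      (if r.val + 1 = n + 1 then qF ^ (2:ℤ) else if r.val + 1 = n then qF ^ (-2:ℤ) else 1)
    else
      (if r.val + 1 = i.val + 2 ∨ r.val + 1 = 2*n - i.val then qF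
       else if r.val + 1 = i.val + 1 ∨ r.val + 1 = 2*n - i.val - 1 then qF⁻¹ else 1)

/-- The inverse of `KOp n i`. -/
def KOpInv (n : ℕ) (i : Fin n) : Matrix (Fin (2*n)) (Fin (2*n)) FF :=
  fun r c =>
    if r ≠ c then 0
    else if i.val + 1 = n then
      (if r.val + 1 = n + 1 then qF ^ (-2:ℤ) else if r.val + 1 = n then qF ^ (2:ℤ) else 1)
    else
      (if r.val + 1 = i.val + 2 ∨ r.val + 1 = 2*n - i.val then qF⁻¹
       else if r.val + 1 = i.val + 1 ∨ r.val + 1 = 2*n - i.val - 1 then qF else 1)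

theorem qF_ne_zero : qF ≠ 0 := RatFunc.X_ne_zero

theorem xiF_ne_zero (n : ℕ) : xiF n ≠ 0 := neg_ne_zero.mpr (zpow_ne_zero _ qF_ne_zero)

theorem eMat_mul_of_ne (n a c : ℕ) {b c₀ : ℕ} (h : b ≠ c₀) : eMat n a b * eMat n c₀ c = 0 := by
  ext r s
  simp only [Matrix.mul_apply, eMat, Matrix.zero_apply]
  refine Finset.sum_eq_zero fun x _ => ?_
  split_ifs <;> first | omega | simp

theorem eMat_mul_self (n a b c : ℕ) (h1 : 1 ≤ b) (h2 : b ≤ 2 * n) :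
    eMat n a b * eMat n b c = eMat n a c := by
  ext r s
  simp only [Matrix.mul_apply, eMat]
  rw [Finset.sum_eq_single (⟨b - 1, by omega⟩ : Fin (2 * n))]
  · have : b - 1 + 1 = b := by omega
    simp only [this, and_true, true_and]
    split_ifs <;> first | omega | simp
  · intro x _ hx
    have : x.val + 1 ≠ b := fun h => hx (Fin.ext (by simp only; omega))
    simp [this]
  · simp

theorem eMat_transpose (n a b : ℕ) : (eMat n a b)ᵀ = eMat n b a := by
  ext r s
  simp only [Matrix.transpose_apply, eMat, and_comm]

/-- The negative generators are the transposes of the positive ones. -/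
theorem XP_transpose (n : ℕ) (i : Fin n) (k : ℤ) : (XP n i k)ᵀ = XM n i k := by
  unfold XP XM
  split_ifs <;> simp [Matrix.transpose_smul, eMat_transpose]

theorem XP_of_last {n : ℕ} {i : Fin n} (h : i.val + 1 = n) (k : ℤ) :
    XP n i k = (if 2 ∣ k then -(qF ^ (-(n : ℤ) * k)) else 0) • eMat n (n + 1) n := by
  rw [XP, if_pos h]
  split_ifs <;> simp

theorem XP_of_lt {n : ℕ} {i : Fin n} (h : i.val + 1 ≠ n) (k : ℤ) :
    XP n i k = (-(qF ^ (-((i.val : ℤ) + 1) * k))) • eMat n (i.val + 2) (i.val + 1)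
      + (xiF n ^ k * qF ^ (((i.val : ℤ) + 1) * k)) •
        eMat n (2 * n - i.val) (2 * n - i.val - 1) := by
  rw [XP, if_neg h]

/-- Two positive generators multiply to zero unless their nodes are adjacent in the Dynkin
diagram. -/
theorem XP_mul_eq_zero {n : ℕ} {i j : Fin n} (h1 : i.val + 1 ≠ j.val) (h2 : j.val + 1 ≠ i.val)
    (k l : ℤ) : XP n i k * XP n j l = 0 := by
  have hi := i.isLt
  have hj := j.isLt
  by_cases h3 : i.val + 1 = n <;> by_cases h4 : j.val + 1 = n
  · rw [XP_of_last h3, XP_of_last h4, smul_mul_smul_comm, eMat_mul_of_ne _ _ _ (by omega),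
      smul_zero]
  · rw [XP_of_last h3, XP_of_lt h4, mul_add]
    simp only [smul_mul_smul_comm]
    rw [eMat_mul_of_ne _ _ _ (by omega), eMat_mul_of_ne _ _ _ (by omega)]
    simp
  · rw [XP_of_lt h3, XP_of_last h4, add_mul]
    simp only [smul_mul_smul_comm]
    rw [eMat_mul_of_ne _ _ _ (by omega), eMat_mul_of_ne _ _ _ (by omega)]
    simp
  · rw [XP_of_lt h3, XP_of_lt h4, add_mul, mul_add, mul_add]
    simp only [smul_mul_smul_comm]
    rw [eMat_mul_of_ne _ _ _ (by omega), eMat_mul_of_ne _ _ _ (by omega),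
      eMat_mul_of_ne _ _ _ (by omega), eMat_mul_of_ne _ _ _ (by omega)]
    simp

/-- The quadratic relation for a pair of operator families, with shift `d` and parameter `Q`. -/
def QuadRel {N : Type*} [Fintype N] (Q : FF) (d : ℤ) (X Y : ℤ → Matrix N N FF) (m l : ℤ) :
    Prop :=
  X (m + d) * Y l - Q • (Y l * X (m + d)) = Q • (X m * Y (l + d)) - Y (l + d) * X m

theorem QuadRel.symm {N : Type*} [Fintype N] {Q : FF} {d : ℤ} {X Y : ℤ → Matrix N N FF}
    {m l : ℤ} (h : QuadRel Q d X Y m l) : QuadRel Q d Y X l m := by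
  unfold QuadRel at *
  rw [sub_eq_sub_iff_add_eq_add] at *
  rw [add_comm, h, add_comm]

/-- Transposing reverses products, so it turns the relation with parameter `Q` into `-Q` times
the relation with parameter `Q⁻¹`. -/
theorem QuadRel.transpose {N : Type*} [Fintype N] {Q : FF} (hQ : Q ≠ 0) {d : ℤ}
    {X Y : ℤ → Matrix N N FF} {m l : ℤ} (h : QuadRel Q d X Y m l) :
    QuadRel Q⁻¹ d (fun k => (X k)ᵀ) (fun k => (Y k)ᵀ) m l := by
  unfold QuadRel at *
  have hT := congrArg (fun M => Q⁻¹ • Mᵀ) h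
  simp only [Matrix.transpose_sub, Matrix.transpose_smul, Matrix.transpose_mul, smul_sub,
    smul_smul, inv_mul_cancel₀ hQ, one_smul] at hT
  rw [← neg_inj, neg_sub, neg_sub]
  exact hT

/-- Adjacent nodes `i`, `i + 1` of the short part of the diagram. -/
theorem quadRel_XP_short {n : ℕ} {i j : Fin n} (hij : i.val + 1 = j.val) (hj : j.val + 1 ≠ n)
    (m l : ℤ) : QuadRel (qF ^ (-1 : ℤ)) 1 (XP n i) (XP n j) m l := by
  have hjlt := j.isLt
  have hi : i.val + 1 ≠ n := by omega
  have hq := qF_ne_zero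
  have hx := xiF_ne_zero n
  have e1 (k l : ℤ) : XP n i k * XP n j l =
      ((xiF n ^ k * qF ^ (((i.val : ℤ) + 1) * k)) * (xiF n ^ l * qF ^ (((j.val : ℤ) + 1) * l))) •
        eMat n (2 * n - i.val) (2 * n - j.val - 1) := by
    rw [XP_of_lt hi, XP_of_lt hj, add_mul, mul_add, mul_add]
    simp only [smul_mul_smul_comm]
    rw [eMat_mul_of_ne _ _ _ (by omega), eMat_mul_of_ne _ _ _ (by omega),
      eMat_mul_of_ne _ _ _ (by omega), show 2 * n - i.val - 1 = 2 * n - j.val by omega,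
      eMat_mul_self _ _ _ _ (by omega) (by omega)]
    simp
  have e2 (k l : ℤ) : XP n j l * XP n i k =
      ((-(qF ^ (-((j.val : ℤ) + 1) * l))) * (-(qF ^ (-((i.val : ℤ) + 1) * k)))) •
        eMat n (j.val + 2) (i.val + 1) := by
    rw [XP_of_lt hi, XP_of_lt hj, add_mul, mul_add, mul_add]
    simp only [smul_mul_smul_comm]
    rw [show i.val + 2 = j.val + 1 by omega, eMat_mul_self _ _ _ _ (by omega) (by omega),
      eMat_mul_of_ne _ _ _ (by omega), eMat_mul_of_ne _ _ _ (by omega),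
      eMat_mul_of_ne _ _ _ (by omega)]
    simp
  unfold QuadRel
  rw [e1, e1, e2, e2, smul_smul, smul_smul]
  have hji : (j.val : ℤ) = i.val + 1 := by omega
  rw [hji]
  congr 2
  · have p1 : xiF n ^ (m + 1) = xiF n ^ m * xiF n := zpow_add_one₀ hx m
    have p2 : xiF n ^ (l + 1) = xiF n ^ l * xiF n := zpow_add_one₀ hx l
    have p3 : qF ^ (((i.val : ℤ) + 1) * (m + 1)) * qF ^ (((i.val : ℤ) + 1 + 1) * l) =
        qF ^ (-1 : ℤ) * (qF ^ (((i.val : ℤ) + 1) * m) *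
          qF ^ (((i.val : ℤ) + 1 + 1) * (l + 1))) := by
      simp only [← zpow_add₀ hq]
      congr 1
      ring
    rw [p1, p2]
    linear_combination (xiF n ^ m * xiF n * xiF n ^ l) * p3
  · rw [neg_mul_neg, neg_mul_neg]
    simp only [← zpow_add₀ hq]
    congr 1
    ring

/-- The node `n - 1` together with the last (long) node `n`: here `ξ² = q^{-4n}` and the shift is
`2`, which preserves parity. -/
theorem quadRel_XP_long {n : ℕ} {i j : Fin n} (hij : i.val + 1 = j.val) (hj : j.val + 1 = n)
    (m l : ℤ) : QuadRel (qF ^ (-2 : ℤ)) 2 (XP n i) (XP n j) m l := by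
  have hjlt := j.isLt
  have hi : i.val + 1 ≠ n := by omega
  have hq := qF_ne_zero
  have hx := xiF_ne_zero n
  have e1 (k l : ℤ) : XP n i k * XP n j l =
      ((xiF n ^ k * qF ^ (((i.val : ℤ) + 1) * k)) *
        (if 2 ∣ l then -(qF ^ (-(n : ℤ) * l)) else 0)) • eMat n (2 * n - i.val) n := by
    rw [XP_of_lt hi, XP_of_last hj, add_mul]
    simp only [smul_mul_smul_comm]
    rw [eMat_mul_of_ne _ _ _ (by omega), show 2 * n - i.val - 1 = n + 1 by omega,
      eMat_mul_self _ _ _ _ (by omega) (by omega)]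
    simp
  have e2 (k l : ℤ) : XP n j l * XP n i k =
      ((if 2 ∣ l then -(qF ^ (-(n : ℤ) * l)) else 0) * (-(qF ^ (-((i.val : ℤ) + 1) * k)))) •
        eMat n (n + 1) (i.val + 1) := by
    rw [XP_of_lt hi, XP_of_last hj, mul_add]
    simp only [smul_mul_smul_comm]
    rw [show i.val + 2 = n by omega, eMat_mul_self _ _ _ _ (by omega) (by omega),
      eMat_mul_of_ne _ _ _ (by omega)]
    simp
  unfold QuadRel
  rw [e1, e1, e2, e2, smul_smul, smul_smul]
  have hni : (i.val : ℤ) + 1 = n - 1 := by omega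
  have hpar : (2 : ℤ) ∣ l + 2 ↔ 2 ∣ l := by omega
  simp only [hni, hpar]
  split_ifs with hl
  · congr 2
    · have p1 : xiF n ^ (m + 2) = xiF n ^ m * qF ^ (-(4 * n : ℤ)) := by
        rw [zpow_add₀ hx, xiF, Even.neg_zpow (by decide : Even (2 : ℤ)), ← _root_.zpow_mul]
        congr 2
        ring
      have p3 : qF ^ (-(4 * n : ℤ)) * (qF ^ (((n : ℤ) - 1) * (m + 2)) * qF ^ (-(n : ℤ) * l)) =
          qF ^ (-2 : ℤ) * (qF ^ (((n : ℤ) - 1) * m) * qF ^ (-(n : ℤ) * (l + 2))) := by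
        simp only [← zpow_add₀ hq]
        congr 1
        ring
      rw [p1]
      linear_combination (-xiF n ^ m) * p3
    · rw [neg_mul_neg, neg_mul_neg]
      simp only [← zpow_add₀ hq]
      congr 1
      ring
  · simp

/-- The relation for the positive generators, restricted to `i ≤ j`; the other half follows from
the symmetry of the relation and of the matrix `(d_i A_{ij})`. -/
theorem quadRel_XP_of_le {n : ℕ} {i j : Fin n} (hij : i.val ≤ j.val) (m l : ℤ) :
    QuadRel (qC n i ^ AC n i j) ((max (dC n i) (dC n j) : ℕ) : ℤ) (XP n i) (XP n j) m l := by
  have hjlt := j.isLt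
  by_cases h : i.val + 1 = j.val
  · have hne : i ≠ j := fun e => by rw [e] at h; omega
    have hi : i.val + 1 ≠ n := by omega
    by_cases hj : j.val + 1 = n
    · have hi2 : i.val + 2 = n := by omega
      simpa [qC, AC, dC, hne, h, hi, hi2, hj, hjlt.ne] using quadRel_XP_long h hj m l
    · simpa [qC, AC, dC, hne, h, hi, hj, hjlt.ne] using quadRel_XP_short h hj m l
  · unfold QuadRel
    simp [XP_mul_eq_zero h (show j.val + 1 ≠ i.val by omega),
      XP_mul_eq_zero (show j.val + 1 ≠ i.val by omega) h]

/-- Symmetry of `d_i A_{ij}`, in exponential form. -/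
theorem qC_zpow_AC_comm (n : ℕ) (i j : Fin n) : qC n i ^ AC n i j = qC n j ^ AC n j i := by
  simp only [qC, ← _root_.zpow_mul]
  congr 1
  have hi := i.isLt
  have hj := j.isLt
  simp only [dC, AC, Fin.ext_iff]
  split_ifs <;> omega

theorem quadRel_XP {n : ℕ} (i j : Fin n) (m l : ℤ) :
    QuadRel (qC n i ^ AC n i j) ((max (dC n i) (dC n j) : ℕ) : ℤ) (XP n i) (XP n j) m l := by
  rcases le_total i.val j.val with h | h
  · exact quadRel_XP_of_le h m l
  · rw [qC_zpow_AC_comm, max_comm]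
    exact (quadRel_XP_of_le h l m).symm

/-- `x^±_{i,m+d_{ij}} x^±_{j,l} − q_i^{±A_{ij}} x^±_{j,l} x^±_{i,m+d_{ij}}
  = q_i^{±A_{ij}} x^±_{i,m} x^±_{j,l+d_{ij}} − x^±_{j,l+d_{ij}} x^±_{i,m}`
in the vector representation, where `d_{ij} = max(d_i,d_j)`. -/
theorem X_quadratic_relation (n : ℕ) (hn : 2 ≤ n) (i j : Fin n) (m l : ℤ) :
    XP n i (m + ((max (dC n i) (dC n j) : ℕ) : ℤ)) * XP n j l
        - (qC n i ^ AC n i j) • (XP n j l * XP n i (m + ((max (dC n i) (dC n j) : ℕ) : ℤ)))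
      = (qC n i ^ AC n i j) • (XP n i m * XP n j (l + ((max (dC n i) (dC n j) : ℕ) : ℤ)))
        - XP n j (l + ((max (dC n i) (dC n j) : ℕ) : ℤ)) * XP n i m
    ∧ XM n i (m + ((max (dC n i) (dC n j) : ℕ) : ℤ)) * XM n j l
        - (qC n i ^ (-AC n i j)) • (XM n j l * XM n i (m + ((max (dC n i) (dC n j) : ℕ) : ℤ)))
      = (qC n i ^ (-AC n i j)) • (XM n i m * XM n j (l + ((max (dC n i) (dC n j) : ℕ) : ℤ)))
        - XM n j (l + ((max (dC n i) (dC n j) : ℕ) : ℤ)) * XM n i m := by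
  refine ⟨quadRel_XP i j m l, ?_⟩
  have hQ : qC n i ^ AC n i j ≠ 0 := zpow_ne_zero _ (zpow_ne_zero _ qF_ne_zero)
  have h := (quadRel_XP i j m l).transpose hQ
  simp only [XP_transpose, ← _root_.zpow_neg] at h
  exact h

end
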